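/- arXiv:q-alg/9701024 — 4 statements merged into one kernel-verified Lean document; each statement's English description precedes it below -/
import Mathlib

section
/- In W_r, for 0 ≤ a ≤ r, the element w_{a,r−a} = (s_{1,r})^a equals the product s_{a+1,1}·s_{a+2,2}·⋯·s_{r,r−a}, and ℓ(w_{a,r−a}) = a(r−a); consequently the concatenation of the defining words of s_{a+1,1}, s_{a+2,2}, …, s_{r,r−a} is a reduced expression for w_{a,r−a}. -/
/-!
Every permutation occurring here is a signed *block exchange* `blk o p q`: it moves the block
`o+1, …, o+p` to the right past the adjacent block `o+p+1, …, o+p+q` (and acts oddly on negative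
integers).  Indeed `s k = blk (k-1) 1 1` for `k ≥ 1`, and then `s_{1,m+1} = blk 0 m 1`,
`s_{a+k+1,k+1} = blk k 1 a` and `w_{a,r-a} = blk 0 (r-a) a` follow by induction, appending one
factor at a time and composing block exchanges (`blk_comp_left`, `blk_comp_right`,
`blk_comp_cyclic`).  The product formula holds because both sides are the same block exchange.

For the length, the defining words give an expression with `a (r - a)` letters.  For the lower
bound, let `invs r w` be the set of pairs `i < j` of nonzero integers in `[-r, r]` with
`w j < w i`.  Right multiplication by a generator `s k` permutes positions and preserves the order
of all such pairs apart from `(k, k+1)` and `(-k-1, -k)` (or `(-1, 1)` when `k = 0`), so it creates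
at most two new inversions (`card_invs_mul_s`).  Hence a word of length `n` has at most `2 n`
inversions, whereas the block exchange `w_{a,r-a}` has at least `2 a (r - a)` of them: all pairs
taken from the two exchanged positive blocks, and their negatives (`le_card_invs`).
-/

/- The hyperoctahedral group `W_r` (the Weyl group of type `B_r`), realized as the group
of permutations `w` of `{±1, …, ±r}` satisfying `(−i)w = −(iw)`.  We realize its elements
inside `Equiv.Perm ℤ`, letting `w` act on `i` on the *right* via `i·w := w⁻¹ i` (so that
`i·(wd) = (i·w)·d` and products of group elements can be written in the same order as in
the paper). -/

namespace QQS

abbrev G : Type := Equiv.Perm ℤ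

/-- The generators `s₀ = (1,−1)` and `sᵢ = (i,i+1)(−i,−i−1)`. -/
def s (i : ℕ) : G :=
  if i = 0 then Equiv.swap 1 (-1)
  else Equiv.swap (i : ℤ) ((i : ℤ) + 1) * Equiv.swap (-(i : ℤ)) (-((i : ℤ) + 1))

/-- The generating set `{s₀, s₁, …, s_{r−1}}` of `W_r`. -/
def gens (r : ℕ) : Set G := {x | ∃ i, i < r ∧ x = s i}

/-- Membership in `W_r`: permutations of `{±1, …, ±r}` commuting with negation. -/
def inW (r : ℕ) (w : G) : Prop :=
  (∀ i : ℤ, w (-i) = -(w i)) ∧ ∀ i : ℤ, (r : ℤ) < |i| → w i = i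

/-- The length `ℓ(w)` of `w ∈ W_r` with respect to the generators `s₀, …, s_{r−1}`. -/
noncomputable def len (r : ℕ) (w : G) : ℕ :=
  sInf {n | ∃ l : List G, l.length = n ∧ (∀ x ∈ l, x ∈ gens r) ∧ l.prod = w}

/-- The partial sum of the first `k` parts of a composition. -/
def psum (l : List ℕ) (k : ℕ) : ℕ := (l.take k).sum

end QQS
namespace QQS

/-- The defining word for `s_{i,j}`: `sᵢ s_{i+1} ⋯ s_{j−1}` if `i ≤ j`, and
`s_{i−1} s_{i−2} ⋯ s_j` if `i > j`. -/
def sijWord (i j : ℕ) : List G :=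
  if i ≤ j then (List.range (j - i)).map (fun k => s (i + k))
  else (List.range (i - j)).map (fun k => s (i - 1 - k))

/-- The element `s_{i,j}` of `W_r`. -/
def sij (i j : ℕ) : G := (sijWord i j).prod

/-- The element `w_{a,r−a} = (s_{1,r})^a`. -/
def wab (r a : ℕ) : G := sij 1 r ^ a

end QQS
namespace QQS

/-- The signed block exchange: as a function on `ℤ`, it exchanges the adjacent blocks
`o+1, …, o+p` and `o+p+1, …, o+p+q`, keeping the order inside each block, does the same on the
negatives, and fixes all other integers. -/
def blk (o p q x : ℤ) : ℤ :=
  if o + 1 ≤ x ∧ x ≤ o + p then x + q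
  else if o + p + 1 ≤ x ∧ x ≤ o + p + q then x - p
  else if o + 1 ≤ -x ∧ -x ≤ o + p then x - q
  else if o + p + 1 ≤ -x ∧ -x ≤ o + p + q then x + p
  else x

/-- Moving two adjacent blocks, of sizes `p'` and then `p`, past the same block of size `q`. -/
lemma blk_comp_left (o p p' q x : ℤ) (ho : 0 ≤ o) (hp : 0 ≤ p) (hp' : 0 ≤ p') (hq : 0 ≤ q) :
    blk o p q (blk (o + p) p' q x) = blk o (p + p') q x := by
  unfold blk
  split_ifs <;> omega

/-- Moving one block of size `p` past two adjacent blocks, of sizes `q'` and then `q`. -/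
lemma blk_comp_right (o p q q' x : ℤ) (ho : 0 ≤ o) (hp : 0 ≤ p) (hq : 0 ≤ q) (hq' : 0 ≤ q') :
    blk (o + q') p q (blk o p q' x) = blk o p (q + q') x := by
  unfold blk
  split_ifs <;> omega

/-- On `1, …, r`, the exchange `blk 0 (r-a) a` is the cyclic shift by `a`, so shifts add. -/
lemma blk_comp_cyclic (r a b x : ℤ) (ha : 0 ≤ a) (hb : 0 ≤ b) (hr : a + b ≤ r) :
    blk 0 (r - a) a (blk 0 (r - b) b x) = blk 0 (r - (a + b)) (a + b) x := by
  unfold blk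
  split_ifs <;> omega

lemma s_apply (k : ℕ) (hk : 1 ≤ k) (x : ℤ) : s k x = blk (k - 1) 1 1 x := by
  have : k ≠ 0 := by omega
  simp only [s, this, if_false, Equiv.Perm.mul_apply, Equiv.swap_apply_def, blk]
  split_ifs <;> omega

lemma s_zero_apply (x : ℤ) : s 0 x = if x = 1 then -1 else if x = -1 then 1 else x := by
  simp only [s, if_true, Equiv.swap_apply_def]

lemma prod_asc (m : ℕ) (x : ℤ) :
    ((List.range m).map (fun k => s (1 + k))).prod x = blk 0 m 1 x := by
  induction m generalizing x with
  | zero => simp only [List.range_zero, List.map_nil, List.prod_nil, Equiv.Perm.one_apply, blk]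
            split_ifs <;> omega
  | succ m ih =>
    rw [List.range_succ, List.map_append, List.prod_append, Equiv.Perm.mul_apply, ih,
      List.map_singleton, List.prod_singleton, s_apply _ (by omega)]
    have h := blk_comp_left 0 m 1 1 x (by omega) (by omega) (by omega) (by omega)
    push_cast
    convert h using 3
    ring

lemma prod_desc (n m : ℕ) (hm : m ≤ n) (x : ℤ) :
    ((List.range m).map (fun k => s (n - k))).prod x = blk (n - m) 1 m x := by
  induction m generalizing x with
  | zero => simp only [List.range_zero, List.map_nil, List.prod_nil, Equiv.Perm.one_apply, blk]
            split_ifs <;> omega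
  | succ m ih =>
    rw [List.range_succ, List.map_append, List.prod_append, Equiv.Perm.mul_apply, ih (by omega),
      List.map_singleton, List.prod_singleton, s_apply _ (by omega), Nat.cast_sub (by omega)]
    have h := blk_comp_right (n - m - 1) 1 m 1 x (by omega) (by omega) (by omega) (by omega)
    push_cast
    convert h using 2 <;> ring

lemma sijWord_desc (a k : ℕ) :
    sijWord (a + k + 1) (k + 1) = (List.range a).map (fun i => s (a + k - i)) := by
  unfold sijWord
  split_ifs with h
  · obtain rfl : a = 0 := by omega
    simp
  · rw [show a + k + 1 - (k + 1) = a by omega]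
    rfl

lemma sij_desc_apply (a k : ℕ) (x : ℤ) :
    sij (a + k + 1) (k + 1) x = blk k 1 a x := by
  rw [sij, sijWord_desc, prod_desc _ _ (by omega)]
  congr 1
  push_cast
  ring

lemma prod_sij_apply (a m : ℕ) (x : ℤ) :
    ((List.range m).map (fun k => sij (a + k + 1) (k + 1))).prod x = blk 0 m a x := by
  induction m generalizing x with
  | zero => simp only [List.range_zero, List.map_nil, List.prod_nil, Equiv.Perm.one_apply, blk]
            split_ifs <;> omega
  | succ m ih =>
    rw [List.range_succ, List.map_append, List.prod_append, Equiv.Perm.mul_apply, ih,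
      List.map_singleton, List.prod_singleton, sij_desc_apply]
    have h := blk_comp_left 0 m 1 a x (by omega) (by omega) (by omega) (by omega)
    push_cast
    convert h using 3
    ring

lemma wab_apply (r a : ℕ) (ha : a ≤ r) (x : ℤ) : wab r a x = blk 0 (r - a) a x := by
  unfold wab
  induction a generalizing x with
  | zero => simp only [pow_zero, Equiv.Perm.one_apply, blk]
            split_ifs <;> omega
  | succ a ih =>
    have hr : sijWord 1 r = (List.range (r - 1)).map (fun k => s (1 + k)) := by
      unfold sijWord
      rw [if_pos (by omega)]
    rw [pow_succ, Equiv.Perm.mul_apply, ih (by omega), sij, hr, prod_asc,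
      Nat.cast_sub (by omega)]
    exact_mod_cast blk_comp_cyclic r a 1 x (by omega) (by omega) (by omega)

/-- The inversions of `w` on the nonzero integers of `[-r, r]`.  The position `0` is left out: with
it, `s 0` would create three inversions rather than one. -/
noncomputable def invs (r : ℕ) (w : G) : Finset (ℤ × ℤ) :=
  (Finset.Icc (-(r : ℤ)) r ×ˢ Finset.Icc (-(r : ℤ)) r).filter
    (fun p => p.1 ≠ 0 ∧ p.2 ≠ 0 ∧ p.1 < p.2 ∧ w p.2 < w p.1)

lemma mem_invs (r : ℕ) (w : G) (i j : ℤ) : (i, j) ∈ invs r w ↔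
    ((-(r : ℤ) ≤ i ∧ i ≤ r) ∧ -(r : ℤ) ≤ j ∧ j ≤ r) ∧ i ≠ 0 ∧ j ≠ 0 ∧ i < j ∧ w j < w i := by
  simp only [invs, Finset.mem_filter, Finset.mem_product, Finset.mem_Icc]

/-- A generator creates at most two inversions: away from the exceptional pairs, applying `s k` to
both positions maps the inversions of `w * s k` injectively to those of `w`. -/
lemma card_invs_mul_s (r : ℕ) (w : G) (k : ℕ) (hk : k < r) :
    (invs r (w * s k)).card ≤ (invs r w).card + 2 := by
  -- For `k = 0` the only order-reversed pair is `(-1, 1)`.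
  let E : Finset (ℤ × ℤ) :=
    if k = 0 then {(-1, 1)} else {((k : ℤ), (k : ℤ) + 1), (-(k : ℤ) - 1, -(k : ℤ))}
  have hE : E.card ≤ 2 := by
    simp only [E]
    split_ifs
    · simp
    · exact Finset.card_le_two
  have h : (invs r (w * s k) \ E).card ≤ (invs r w).card := by
    refine Finset.card_le_card_of_injOn (fun p => (s k p.1, s k p.2)) ?_ ?_
    · rintro ⟨i, j⟩ hp
      rw [Finset.mem_coe] at hp ⊢
      simp only [Finset.mem_sdiff, mem_invs, Equiv.Perm.mul_apply] at hp ⊢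
      obtain ⟨⟨⟨⟨h1, h2⟩, h3, h4⟩, h5, h6, h7, h8⟩, h9⟩ := hp
      suffices hs : ((-(r : ℤ) ≤ s k i ∧ s k i ≤ r) ∧ -(r : ℤ) ≤ s k j ∧ s k j ≤ r) ∧
          s k i ≠ 0 ∧ s k j ≠ 0 ∧ s k i < s k j from
        ⟨hs.1, hs.2.1, hs.2.2.1, hs.2.2.2, h8⟩
      clear h8
      rcases Nat.eq_zero_or_pos k with rfl | hk0
      · simp only [E, if_true, Finset.mem_singleton, Prod.mk.injEq] at h9
        simp only [s_zero_apply]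
        grind
      · simp only [E, hk0.ne', if_false, Finset.mem_insert, Finset.mem_singleton,
          Prod.mk.injEq] at h9
        rw [s_apply k hk0, s_apply k hk0]
        simp only [blk]
        split_ifs <;> omega
    · rintro ⟨i, j⟩ - ⟨i', j'⟩ - h
      simpa using h
  have := Finset.card_le_card_sdiff_add_card (s := invs r (w * s k)) (t := E)
  omega

lemma card_invs_prod (r : ℕ) (l : List G) (hl : ∀ x ∈ l, x ∈ gens r) :
    (invs r l.prod).card ≤ 2 * l.length := by
  induction l using List.reverseRecOn with
  | nil =>
    rw [List.length_nil, mul_zero, Nat.le_zero, Finset.card_eq_zero, List.prod_nil, invs,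
      Finset.filter_eq_empty_iff]
    rintro p - ⟨-, -, h, h'⟩
    exact lt_asymm h h'
  | append_singleton l x ih =>
    obtain ⟨k, hk, rfl⟩ := hl x (by simp)
    have h1 := ih (fun y hy => hl y (by simp [hy]))
    have h2 := card_invs_mul_s r l.prod k hk
    rw [List.prod_append, List.prod_singleton, List.length_append, List.length_singleton]
    omega

/-- The exchanged blocks contribute `a (r - a)` inversions among positive positions and as many
among negative ones. -/
lemma le_card_invs (r a : ℕ) (ha : a ≤ r) :
    2 * (a * (r - a)) ≤ (invs r (wab r a)).card := by
  obtain ⟨b, rfl⟩ := Nat.exists_eq_add_of_le ha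
  let A : Finset (ℤ × ℤ) := Finset.Ioc (0 : ℤ) b ×ˢ Finset.Ioc (b : ℤ) (b + a)
  let B : Finset (ℤ × ℤ) := Finset.Ico (-(b : ℤ) - a) (-b) ×ˢ Finset.Ico (-(b : ℤ)) 0
  have hd : Disjoint A B := by
    rw [Finset.disjoint_left]
    rintro ⟨i, j⟩ h1 h2
    simp only [A, B, Finset.mem_product, Finset.mem_Ioc, Finset.mem_Ico] at h1 h2
    omega
  have hsub : A ∪ B ⊆ invs (a + b) (wab (a + b) a) := by
    rintro ⟨i, j⟩ h
    simp only [A, B, mem_invs, Finset.mem_union, Finset.mem_product, Finset.mem_Ioc,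
      Finset.mem_Ico, wab_apply _ _ ha] at h ⊢
    simp only [blk]
    push_cast
    rcases h with h | h <;> split_ifs <;> omega
  have hc := Finset.card_le_card hsub
  rw [Finset.card_union_of_disjoint hd] at hc
  have hA : A.card = b * a := by simp [A]
  have hB : B.card = a * b := by simp [B]
  rw [hA, hB, mul_comm b a] at hc
  rw [Nat.add_sub_cancel_left]
  omega

/-- In `W_r`, for `0 ≤ a ≤ r`, the element `w_{a,r−a} = (s_{1,r})^a`
equals the product `s_{a+1,1} · s_{a+2,2} · ⋯ · s_{r,r−a}`, and `ℓ(w_{a,r−a}) = a(r−a)`;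
consequently the concatenation of the defining words of `s_{a+1,1}, …, s_{r,r−a}` is a
reduced expression for `w_{a,r−a}`. -/
theorem wab_reduced_expression (r a : ℕ) (ha : a ≤ r) :
    wab r a = ((List.range (r - a)).map (fun k => sij (a + k + 1) (k + 1))).prod ∧
    len r (wab r a) = a * (r - a) ∧
    (((List.range (r - a)).map (fun k => sijWord (a + k + 1) (k + 1))).flatten).prod
      = wab r a ∧
    (∀ x ∈ ((List.range (r - a)).map (fun k => sijWord (a + k + 1) (k + 1))).flatten,
      x ∈ gens r) ∧
    (((List.range (r - a)).map (fun k => sijWord (a + k + 1) (k + 1))).flatten).length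
      = a * (r - a) := by
  have h1 : wab r a = ((List.range (r - a)).map (fun k => sij (a + k + 1) (k + 1))).prod := by
    ext x
    rw [wab_apply r a ha, prod_sij_apply, Nat.cast_sub ha]
  have h3 : (((List.range (r - a)).map (fun k => sijWord (a + k + 1) (k + 1))).flatten).prod
      = wab r a := by
    rw [h1, List.prod_flatten, List.map_map]
    rfl
  have h4 : ∀ x ∈ ((List.range (r - a)).map (fun k => sijWord (a + k + 1) (k + 1))).flatten,
      x ∈ gens r := by
    intro x hx
    simp only [List.mem_flatten, List.mem_map, List.mem_range, sijWord_desc] at hx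
    obtain ⟨_, ⟨k, hk, rfl⟩, hx⟩ := hx
    simp only [List.mem_map, List.mem_range] at hx
    obtain ⟨i, hi, rfl⟩ := hx
    exact ⟨a + k - i, by omega, rfl⟩
  have h5 : (((List.range (r - a)).map (fun k => sijWord (a + k + 1) (k + 1))).flatten).length
      = a * (r - a) := by
    simp [sijWord_desc, List.length_flatten, Function.comp_def, mul_comm]
  refine ⟨h1, le_antisymm (Nat.sInf_le ⟨_, h5, h4, h3⟩) ?_, h3, h4, h5⟩
  refine le_csInf ⟨_, _, h5, h4, h3⟩ ?_
  rintro n ⟨l, rfl, hl, hw⟩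
  have h6 := card_invs_prod r l hl
  have h7 := le_card_invs r a ha
  rw [hw] at h6
  omega

end QQS
end

section
/- In the Hecke algebra H of type B_r, for every 0 ≤ a ≤ r and every b with 0 ≤ b ≤ r−1 and b ≠ a, the elements u_a^+ and u_a^− commute with T_b, i.e. u_a^+·T_b = T_b·u_a^+ and u_a^−·T_b = T_b·u_a^−. -/
/-!
The factors of `u_a^±` are `c q^k + s X_k`, where `X_k = T_k ⋯ T_1 T_0 T_1 ⋯ T_k` are the
Jucys–Murphy elements, so that `X_0 = T_0` and `X_{k+1} = T_{k+1} X_k T_{k+1}`; here `(c, s)` is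
`(1, 1)` for `u_a^+` and `(Q, -1)` for `u_a^-`. Everything rests on how `T_b` interacts with them.

* `T_b` commutes with `X_k` unless `k = b - 1` or `k = b`: for `k + 2 ≤ b` by the far
  commutation relations, and for `b < k` because of the braid relations (`commute_jm_of_lt`).
  In particular the `X_k` commute with each other.
* For `b = k + 1`, `T_b` commutes with `X_k X_{k+1}` and with `X_{k+1} + q X_k`, the latter by the
  quadratic relation, hence with `(c q^k + s X_k)(c q^{k+1} + s X_{k+1})`, whose linear part is
  `s c q^k (X_{k+1} + q X_k)`.

If `b > a`, then `T_b` commutes with every factor of `u_a^±`; if `b < a`, the two exceptional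
factors `k = b - 1, b` occur next to each other and `T_b` commutes with their product
(for `b = 0` the only candidate is `X_0 = T_0`, which is harmless). Only `b = a` separates them.
-/

/- The Hecke algebra `H` of type `B_r` over a commutative ring `R` with parameters
`q, Q`: we work with an arbitrary `R`-algebra `H` together with elements
`T 0, T 1, …, T (r−1)` satisfying the defining relations of the Hecke algebra of
type `B_r`. -/

namespace QQS

/-- `T_{i,1} = T_{i−1} T_{i−2} ⋯ T₁` (equal to `1` when `i = 1`). -/
def Tdown {H : Type*} [Ring H] (T : ℕ → H) (i : ℕ) : H :=
  ((List.range (i - 1)).map (fun k => T (i - 1 - k))).prod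

/-- `T_{1,i} = T₁ T₂ ⋯ T_{i−1}` (equal to `1` when `i = 1`). -/
def Tup {H : Type*} [Ring H] (T : ℕ → H) (i : ℕ) : H :=
  ((List.range (i - 1)).map (fun k => T (k + 1))).prod

/-- `u_a⁺ = ∏_{i=1}^a (q^{i−1} + T_{i,1} T₀ T_{1,i})`, factors in increasing order of `i`. -/
def uplusH (R : Type*) [CommRing R] {H : Type*} [Ring H] [Algebra R H]
    (q : R) (T : ℕ → H) (a : ℕ) : H :=
  ((List.range a).map
    (fun k => algebraMap R H (q ^ k) + Tdown T (k + 1) * T 0 * Tup T (k + 1))).prod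

/-- `u_a⁻ = ∏_{i=1}^a (Q·q^{i−1} − T_{i,1} T₀ T_{1,i})`, factors in increasing order of `i`. -/
def uminusH (R : Type*) [CommRing R] {H : Type*} [Ring H] [Algebra R H]
    (Q q : R) (T : ℕ → H) (a : ℕ) : H :=
  ((List.range a).map
    (fun k => algebraMap R H (Q * q ^ k) - Tdown T (k + 1) * T 0 * Tup T (k + 1))).prod

end QQS

namespace QQS

/-- The Jucys–Murphy element `X_k = T_k ⋯ T_1 T_0 T_1 ⋯ T_k`, indexed from `0`. -/
def jm {H : Type*} [Ring H] (T : ℕ → H) : ℕ → H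
  | 0 => T 0
  | k + 1 => T (k + 1) * jm T k * T (k + 1)

section

variable {R H : Type*} [CommRing R] [Ring H] [Algebra R H] {T : ℕ → H}

lemma Tdown_mul_Tup (T : ℕ → H) (k : ℕ) :
    Tdown T (k + 1) * T 0 * Tup T (k + 1) = jm T k := by
  induction k with
  | zero => simp [Tdown, Tup, jm]
  | succ k ih =>
    have h1 : Tdown T (k + 1 + 1) = T (k + 1) * Tdown T (k + 1) := by
      simp only [Tdown, Nat.add_sub_cancel, List.prod_range_succ']
      simp [Nat.add_sub_add_right]
    have h2 : Tup T (k + 1 + 1) = Tup T (k + 1) * T (k + 1) := by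
      simp only [Tup, Nat.add_sub_cancel, List.prod_range_succ]
    rw [h1, h2, jm, ← ih]
    simp only [mul_assoc]

/-- Far commutation: `T_b` commutes with every generator occurring in `X_k`. -/
lemma commute_jm_of_gt {n : ℕ}
    (far : ∀ i j, i + 2 ≤ j → j ≤ n → Commute (T j) (T i)) {b k : ℕ}
    (hk : k + 2 ≤ b) (hb : b ≤ n) : Commute (T b) (jm T k) := by
  induction k with
  | zero => exact far 0 b hk hb
  | succ k ih =>
    have h := far (k + 1) b hk hb
    exact (h.mul_right (ih (by omega))).mul_right h

/-- Conjugating by `y x` turns the braid relation into a commutation: the case `k = b + 1` of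
`commute_jm_of_lt`, with `x = T_b`, `y = T_{b+1}` and `z = X_{b-1}`. -/
lemma commute_of_braid {x y z : H} (hxy : x * y * x = y * x * y) (hyz : Commute y z) :
    Commute x (y * (x * z * x) * y) := by
  have hyz' : y * z = z * y := hyz
  calc x * (y * (x * z * x) * y) = (x * y * x) * z * x * y := by simp only [mul_assoc]
    _ = y * x * (y * z) * x * y := by rw [hxy]; simp only [mul_assoc]
    _ = y * x * z * (y * x * y) := by rw [hyz']; simp only [mul_assoc]
    _ = y * (x * z * x) * y * x := by rw [← hxy]; simp only [mul_assoc]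

lemma commute_jm_of_lt {n : ℕ}
    (far : ∀ i j, i + 2 ≤ j → j ≤ n → Commute (T j) (T i))
    (braid : ∀ i, 1 ≤ i → i + 1 ≤ n → T i * T (i + 1) * T i = T (i + 1) * T i * T (i + 1))
    (braid₀ : 1 ≤ n → T 0 * T 1 * T 0 * T 1 = T 1 * T 0 * T 1 * T 0) {b k : ℕ}
    (hbk : b < k) (hk : k ≤ n) : Commute (T b) (jm T k) := by
  induction k, hbk using Nat.le_induction with
  | base =>
    cases b with
    | zero =>
      have h := braid₀ hk
      simp only [mul_assoc] at h
      simpa [jm, Commute, SemiconjBy, mul_assoc] using h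
    | succ b =>
      exact commute_of_braid (braid _ (by omega) hk) (commute_jm_of_gt far (by omega) hk)
  | succ k hbk ih =>
    have h := (far b (k + 1) (by omega) hk).symm
    exact (h.mul_right (ih (by omega))).mul_right h

lemma commute_jm_jm {n : ℕ}
    (h : ∀ b k, b < k → k ≤ n → Commute (T b) (jm T k)) {j k : ℕ}
    (hjk : j < k) (hk : k ≤ n) : Commute (jm T j) (jm T k) := by
  induction j with
  | zero => exact h 0 k hjk hk
  | succ j ih =>
    have hT := h (j + 1) k hjk hk
    exact (hT.mul_left (ih (by omega))).mul_left hT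

/-- The two factors with which `t` fails to commute have a product commuting with `t`; here
`t = T_{k+1}`, `x = X_k` and `t x t = X_{k+1}`. -/
lemma commute_pair {t x : H} {q : R} (c s : R)
    (ht : t * t = q • (1 : H) + (q - 1) • t) (hx : Commute x (t * x * t)) :
    Commute t ((c • (1 : H) + s • x) * ((c * q) • (1 : H) + s • (t * x * t))) := by
  have hlin : Commute t (t * x * t + q • x) := by
    have h1 : t * (t * x * t) = q • (x * t) + (q - 1) • (t * x * t) := by
      rw [← mul_assoc, ← mul_assoc, ht]
      simp only [add_mul, smul_mul_assoc, one_mul]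
    have h2 : t * x * t * t = q • (t * x) + (q - 1) • (t * x * t) := by
      rw [mul_assoc (t * x), ht]
      simp only [mul_add, mul_smul_comm, mul_one]
    change _ = _
    rw [mul_add, add_mul, h1, h2, mul_smul_comm, smul_mul_assoc]
    abel
  have hquad : Commute t (x * (t * x * t)) := by
    change t * (x * (t * x * t)) = x * (t * x * t) * t
    rw [hx.eq]
    nth_rewrite 1 [← hx.eq]
    simp only [mul_assoc]
  have key : (c • (1 : H) + s • x) * ((c * q) • (1 : H) + s • (t * x * t)) =
      (c * (c * q)) • (1 : H) + (s * c) • (t * x * t + q • x) + (s * s) • (x * (t * x * t)) := by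
    simp only [add_mul, mul_add, smul_mul_assoc, mul_smul_comm, one_mul, mul_one]
    module
  rw [key]
  exact (((Commute.one_right t).smul_right _).add_right (hlin.smul_right _)).add_right
    (hquad.smul_right _)

/-- The common form of `u_a^+` and `u_a^-`: the product `∏_{k<a} (c q^k + s X_k)`. -/
def uProd (q c s : R) (T : ℕ → H) (a : ℕ) : H :=
  ((List.range a).map (fun k => (c * q ^ k) • (1 : H) + s • jm T k)).prod

lemma uProd_succ (q c s : R) (T : ℕ → H) (a : ℕ) :
    uProd q c s T (a + 1) = uProd q c s T a * ((c * q ^ a) • (1 : H) + s • jm T a) :=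
  List.prod_range_succ _ _

lemma commute_factor {t x : H} (c s : R) (h : Commute t x) :
    Commute t (c • (1 : H) + s • x) :=
  ((Commute.one_right t).smul_right _).add_right (h.smul_right _)

lemma commute_uProd {n : ℕ} {q : R} (c s : R)
    (quad : ∀ i, 1 ≤ i → i ≤ n → T i * T i = q • (1 : H) + (q - 1) • T i)
    (far : ∀ i j, i + 2 ≤ j → j ≤ n → Commute (T j) (T i))
    (braid : ∀ i, 1 ≤ i → i + 1 ≤ n → T i * T (i + 1) * T i = T (i + 1) * T i * T (i + 1))
    (braid₀ : 1 ≤ n → T 0 * T 1 * T 0 * T 1 = T 1 * T 0 * T 1 * T 0)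
    {a b : ℕ} (ha : a ≤ n + 1) (hb : b ≤ n) (hba : b ≠ a) :
    Commute (T b) (uProd q c s T a) := by
  have low : ∀ b k, b < k → k ≤ n → Commute (T b) (jm T k) :=
    fun _ _ => commute_jm_of_lt far braid braid₀
  have small : ∀ m, m + 1 ≤ b → Commute (T b) (uProd q c s T m) := by
    intro m hm
    induction m with
    | zero => exact Commute.one_right _
    | succ m ih =>
      rw [uProd_succ]
      exact (ih (by omega)).mul_right (commute_factor _ _ (commute_jm_of_gt far hm hb))
  rcases lt_or_gt_of_ne hba with hlt | hgt
  · induction a, hlt using Nat.le_induction with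
    | base =>
      cases b with
      | zero =>
        rw [uProd_succ]
        exact (Commute.one_right _).mul_right (commute_factor _ _ (Commute.refl _))
      | succ b =>
        rw [uProd_succ, uProd_succ, mul_assoc]
        refine (small b le_rfl).mul_right ?_
        rw [pow_succ, ← mul_assoc]
        exact commute_pair _ _ (quad _ (by omega) hb) (commute_jm_jm low (Nat.lt_succ_self b) hb)
    | succ a hlt ih =>
      rw [uProd_succ]
      exact (ih (by omega) (by omega)).mul_right
        (commute_factor _ _ (low _ _ hlt (by omega)))
  · exact small a hgt

lemma uplusH_eq_uProd (q : R) (T : ℕ → H) (a : ℕ) : uplusH R q T a = uProd q 1 1 T a := by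
  simp only [uplusH, uProd, Tdown_mul_Tup, Algebra.algebraMap_eq_smul_one, one_mul, one_smul]

lemma uminusH_eq_uProd (Q q : R) (T : ℕ → H) (a : ℕ) :
    uminusH R Q q T a = uProd q Q (-1) T a := by
  simp only [uminusH, uProd, Tdown_mul_Tup, Algebra.algebraMap_eq_smul_one, neg_smul, one_smul,
    sub_eq_add_neg]

end

end QQS

namespace QQS

/-- In the Hecke algebra `H` of type `B_r`, for every `0 ≤ a ≤ r` and
every `b` with `0 ≤ b ≤ r−1` and `b ≠ a`, the elements `u_a⁺` and `u_a⁻` commute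
with `T_b`. -/
theorem uplus_uminus_commute (R : Type*) [CommRing R] (q Q : R)
    (hq : IsUnit q) (hQ : IsUnit Q) (r : ℕ)
    (H : Type*) [Ring H] [Algebra R H] (T : ℕ → H)
    (relA : ∀ i, 1 ≤ i → i ≤ r - 1 →
      T i * T i = algebraMap R H q + algebraMap R H (q - 1) * T i)
    (relB : T 0 * T 0 = algebraMap R H Q + algebraMap R H (Q - 1) * T 0)
    (relC : ∀ i j, i ≤ r - 1 → j ≤ r - 1 → 2 ≤ ((i : ℤ) - (j : ℤ)).natAbs →
      T i * T j = T j * T i)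
    (relD : ∀ i, 1 ≤ i → i ≤ r - 2 →
      T i * T (i + 1) * T i = T (i + 1) * T i * T (i + 1))
    (relE : 2 ≤ r → T 0 * T 1 * T 0 * T 1 = T 1 * T 0 * T 1 * T 0)
    (a : ℕ) (ha : a ≤ r) (b : ℕ) (hb : b ≤ r - 1) (hba : b ≠ a) :
    uplusH R q T a * T b = T b * uplusH R q T a ∧
    uminusH R Q q T a * T b = T b * uminusH R Q q T a := by
  have key : ∀ c s : R, Commute (T b) (uProd q c s T a) := by
    intro c s
    rcases Nat.eq_zero_or_pos r with rfl | hr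
    -- for `r = 0` the truncated bound `b ≤ r - 1` still allows `b = 0`, but then `a = 0 = b`
    · omega
    refine commute_uProd (n := r - 1) c s ?_ ?_ ?_ ?_ (by omega) hb hba
    · intro i h1 h2
      rw [relA i h1 h2]
      simp only [Algebra.algebraMap_eq_smul_one, smul_mul_assoc, one_mul]
    · exact fun i j hij hj => relC j i hj (by omega) (by omega)
    · exact fun i h1 h2 => relD i h1 (by omega)
    · exact fun h => relE (by omega)
  rw [uplusH_eq_uProd, uminusH_eq_uProd]
  exact ⟨(key _ _).eq.symm, (key _ _).eq.symm⟩

end QQS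
end

section
/- In the Hecke algebra H of type B_r, for every a with 1 ≤ a ≤ r one has u_a^+·T₀ = Q·u_a^+ and u_a^−·T₀ = −u_a^−. -/
namespace QQS

theorem Tdown_add_two {H : Type*} [Ring H] (T : ℕ → H) (k : ℕ) :
    Tdown T (k + 2) = T (k + 1) * Tdown T (k + 1) := by
  have h : ∀ j, k + 1 - (j + 1) = k - j := fun j => by omega
  simp [Tdown, List.range_succ_eq_map, Function.comp_def, h]

theorem Tup_add_two {H : Type*} [Ring H] (T : ℕ → H) (k : ℕ) :
    Tup T (k + 2) = Tup T (k + 1) * T (k + 1) := by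
  simp [Tup, List.range_succ]

/-- `T₀` commutes with `T_{i,1} T₀ T_{1,i}` for `2 ≤ i ≤ r`, here with `i = k + 2`. -/
theorem commute_Tdown_T0_Tup {H : Type*} [Ring H] (T : ℕ → H) (r : ℕ)
    (relC : ∀ i, 2 ≤ i → i ≤ r - 1 → Commute (T i) (T 0))
    (relE : 2 ≤ r → T 0 * T 1 * T 0 * T 1 = T 1 * T 0 * T 1 * T 0) (k : ℕ) (hk : k + 2 ≤ r) :
    Commute (Tdown T (k + 2) * T 0 * Tup T (k + 2)) (T 0) := by
  induction k with
  | zero => simpa [Commute, SemiconjBy, Tdown, Tup, mul_assoc] using (relE hk).symm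
  | succ k ih =>
    have h := relC (k + 2) (by omega) (by omega)
    have e : Tdown T (k + 1 + 2) * T 0 * Tup T (k + 1 + 2)
        = T (k + 2) * (Tdown T (k + 2) * T 0 * Tup T (k + 2)) * T (k + 2) := by
      rw [Tdown_add_two T (k + 1), Tup_add_two T (k + 1)]
      simp only [mul_assoc, add_assoc, Nat.reduceAdd]
    rw [e]
    exact (h.mul_left (ih (by omega))).mul_left h

/-- In the Hecke algebra `H` of type `B_r`, for every `a` with
`1 ≤ a ≤ r` one has `u_a⁺ · T₀ = Q · u_a⁺` and `u_a⁻ · T₀ = − u_a⁻`. -/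
theorem uplus_uminus_T0 (R : Type*) [CommRing R] (q Q : R)
    (hq : IsUnit q) (hQ : IsUnit Q) (r : ℕ)
    (H : Type*) [Ring H] [Algebra R H] (T : ℕ → H)
    (relA : ∀ i, 1 ≤ i → i ≤ r - 1 →
      T i * T i = algebraMap R H q + algebraMap R H (q - 1) * T i)
    (relB : T 0 * T 0 = algebraMap R H Q + algebraMap R H (Q - 1) * T 0)
    (relC : ∀ i j, i ≤ r - 1 → j ≤ r - 1 → 2 ≤ ((i : ℤ) - (j : ℤ)).natAbs →
      T i * T j = T j * T i)
    (relD : ∀ i, 1 ≤ i → i ≤ r - 2 →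
      T i * T (i + 1) * T i = T (i + 1) * T i * T (i + 1))
    (relE : 2 ≤ r → T 0 * T 1 * T 0 * T 1 = T 1 * T 0 * T 1 * T 0)
    (a : ℕ) (ha1 : 1 ≤ a) (har : a ≤ r) :
    uplusH R q T a * T 0 = algebraMap R H Q * uplusH R q T a ∧
    uminusH R Q q T a * T 0 = - uminusH R Q q T a := by
  have hC := commute_Tdown_T0_Tup T r
    (fun i h2 hi => relC i 0 hi (Nat.zero_le _) (by omega)) relE
  obtain ⟨n, rfl⟩ : ∃ n, a = n + 1 := ⟨a - 1, by omega⟩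
  clear ha1
  induction n with
  | zero =>
    constructor
    · simp only [uplusH, Tdown, Tup, List.range_one, List.map_cons, List.map_nil, List.prod_cons,
        List.prod_nil, List.range_zero, zero_add, Nat.sub_self, pow_zero, map_one, mul_one, one_mul,
        add_mul, mul_add, relB, map_sub, sub_mul]
      abel
    · simp only [uminusH, Tdown, Tup, List.range_one, List.map_cons, List.map_nil, List.prod_cons,
        List.prod_nil, List.range_zero, zero_add, Nat.sub_self, pow_zero, map_one, mul_one, one_mul,
        relB, map_sub, sub_mul]
      abel
  | succ n ih =>
    obtain ⟨ihp, ihm⟩ := ih (by omega)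
    have hL := hC n har
    have ep : uplusH R q T (n + 1 + 1) = uplusH R q T (n + 1) *
        (algebraMap R H (q ^ (n + 1)) + Tdown T (n + 2) * T 0 * Tup T (n + 2)) := by
      simp only [uplusH, List.range_succ (n := n + 1), List.map_append, List.prod_append,
        List.map_cons, List.map_nil, List.prod_singleton]
    have em : uminusH R Q q T (n + 1 + 1) = uminusH R Q q T (n + 1) *
        (algebraMap R H (Q * q ^ (n + 1)) - Tdown T (n + 2) * T 0 * Tup T (n + 2)) := by
      simp only [uminusH, List.range_succ (n := n + 1), List.map_append, List.prod_append,
        List.map_cons, List.map_nil, List.prod_singleton]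
    have hp := (Algebra.commute_algebraMap_left (q ^ (n + 1)) (T 0)).add_left hL
    have hm := (Algebra.commute_algebraMap_left (Q * q ^ (n + 1)) (T 0)).sub_left hL
    constructor
    · rw [ep, mul_assoc, hp.eq, ← mul_assoc, ihp, mul_assoc]
    · rw [em, mul_assoc, hm.eq, ← mul_assoc, ihm, neg_mul]

end QQS
end

section
/- Let λ = (λ^{(1)},λ^{(2)}) be an a-bicomposition of r. Let W_a be the subgroup of W_r generated by s₀,…,s_{a−1}, let S_a be the subgroup generated by s₁,…,s_{a−1}, and let S_{λ^{(2)}} be the subgroup of S_r consisting of permutations fixing 1,…,a and stabilizing each row of the second component of t^λ setwise. Let D be the set of distinguished (minimal-length) right coset representatives of W_a × S_{λ^{(2)}} in W_r, i.e. d ∈ D if and only if ℓ(wd) = ℓ(w) + ℓ(d) for all w ∈ W_a × S_{λ^{(2)}}. Then {wd : w ∈ S_a, d ∈ D, and t^λ·w is row standard} = {v ∈ W_r : t^λ·v is row standard}. -/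
namespace QQS

/- Bitableaux.  Given an `a`-bicomposition `λ = (l1, l2)` of `r`, the superstandard
bitableau `t^λ` has `1, …, a` entered in order along the rows of the first component and
`a+1, …, r` in order along the rows of the second component.  A general `λ`-bitableau is
`t^λ·w` for `w ∈ W_r`; since `w` acts on entries on the right (`i·w = w⁻¹ i`), the entry
of `t^λ·w` at a given cell `p` is `w⁻¹ (tlamE a l1 l2 p)`. -/

/-- `x` and `y` lie (strictly) inside the same row-interval of the composition `l`,
i.e. the entries `x` and `y` lie in the same row of the row-filling of `l`. -/
def sameRowZ (l : List ℕ) (x y : ℤ) : Prop :=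
  ∃ k : ℕ, (psum l k : ℤ) < x ∧ x ≤ (psum l (k + 1) : ℤ) ∧
    (psum l k : ℤ) < y ∧ y ≤ (psum l (k + 1) : ℤ)

/-- The (0-based) index of the row containing the entry `m` in the row-filling of the
composition `l`. -/
def rowIdxZ (l : List ℕ) (m : ℤ) : ℕ :=
  ((Finset.range l.length).filter (fun k => (psum l (k + 1) : ℤ) < m)).card

/-- `row_t`: given the bicomposition `(l1, l2)` (with `n` parts in total), the row label
of the cell of `t^λ` holding the value `m`; rows of the first component are labelled
`1, …` and rows `j` of the second component are labelled `n + j`. -/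
def rowOfVal (n : ℕ) (l1 l2 : List ℕ) (m : ℤ) : ℕ :=
  if m ≤ (l1.sum : ℤ) then rowIdxZ l1 m + 1 else n + rowIdxZ l2 (m - l1.sum) + 1

/-- The bitableau `t^λ·w` is row standard: all entries of the first component are
positive, and the entries increase from left to right along each row of each
component.  Here `a = l1.sum`. -/
def rowStd (a : ℕ) (l1 l2 : List ℕ) (w : G) : Prop :=
  (∀ i j : ℕ, j < l1.getD i 0 → 0 < w⁻¹ ((psum l1 i + j + 1 : ℕ) : ℤ)) ∧
  (∀ i j : ℕ, j + 1 < l1.getD i 0 →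
    w⁻¹ ((psum l1 i + j + 1 : ℕ) : ℤ) < w⁻¹ ((psum l1 i + j + 2 : ℕ) : ℤ)) ∧
  (∀ i j : ℕ, j + 1 < l2.getD i 0 →
    w⁻¹ ((a + psum l2 i + j + 1 : ℕ) : ℤ) < w⁻¹ ((a + psum l2 i + j + 2 : ℕ) : ℤ))

/-- `p = (cpt, i, j)` is a cell of the diagram of the bicomposition `(l1, l2)`;
`cpt = true` denotes the first component. -/
def cell (l1 l2 : List ℕ) (p : Bool × ℕ × ℕ) : Prop :=
  p.2.2 < (if p.1 then l1 else l2).getD p.2.1 0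

instance cellDec (l1 l2 : List ℕ) : DecidablePred (cell l1 l2) := fun p =>
  inferInstanceAs (Decidable (p.2.2 < (if p.1 then l1 else l2).getD p.2.1 0))

/-- The entry of the bitableau `t^λ` at the cell `p`, where `a = l1.sum`. -/
def tlamE (a : ℕ) (l1 l2 : List ℕ) (p : Bool × ℕ × ℕ) : ℤ :=
  if p.1 then ((psum l1 p.2.1 + p.2.2 + 1 : ℕ) : ℤ)
  else ((a + psum l2 p.2.1 + p.2.2 + 1 : ℕ) : ℤ)

end QQS
namespace QQS

/- The group algebra `R W_r`, inside the monoid algebra of `Equiv.Perm ℤ`. -/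

/-- The underlying set of the group algebra `R W_r` inside `MonoidAlgebra R G`:
the `R`-span of the elements `w ∈ W_r`. -/
noncomputable def Hspan (R : Type) [CommRing R] (r : ℕ) :
    Submodule R (MonoidAlgebra R G) :=
  Submodule.span R {x | ∃ w, inW r w ∧ x = MonoidAlgebra.of R G w}

/-- `u_a⁺ = ∏_{i=1}^a (1 + (i,−i))` in the group algebra (the case `q = Q = 1`). -/
noncomputable def uplusGA (R : Type) [CommRing R] (a : ℕ) : MonoidAlgebra R G :=
  ((List.range a).map (fun k => (1 : MonoidAlgebra R G) +
    MonoidAlgebra.of R G (Equiv.swap ((k + 1 : ℕ) : ℤ) (-((k + 1 : ℕ) : ℤ))))).prod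

/-- `u_m⁻ = ∏_{i=1}^m (1 − (i,−i))` in the group algebra (the case `q = Q = 1`). -/
noncomputable def uminusGA (R : Type) [CommRing R] (m : ℕ) : MonoidAlgebra R G :=
  ((List.range m).map (fun k => (1 : MonoidAlgebra R G) -
    MonoidAlgebra.of R G (Equiv.swap ((k + 1 : ℕ) : ℤ) (-((k + 1 : ℕ) : ℤ))))).prod

/-- The symmetric group `S_r ≤ W_r`, generated by `s₁, …, s_{r−1}`. -/
def Sgrp (r : ℕ) : Subgroup G := Subgroup.closure {x | ∃ i, 1 ≤ i ∧ i < r ∧ x = s i}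

/-- `x` and `y` lie in the same row of the bitableau `t^λ`, where `λ = (l1, l2)` and
`a = l1.sum`. -/
def sameRowPair (a : ℕ) (l1 l2 : List ℕ) (x y : ℤ) : Prop :=
  sameRowZ l1 x y ∨ sameRowZ l2 (x - (a : ℤ)) (y - (a : ℤ))

/-- The set of `w ∈ S_r` stabilizing each row of `t^λ` setwise. -/
def rowStabSet (r a : ℕ) (l1 l2 : List ℕ) : Set G :=
  {w | w ∈ Sgrp r ∧ ∀ i : ℤ, 1 ≤ i → i ≤ (r : ℤ) → sameRowPair a l1 l2 i (w⁻¹ i)}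

/-- `x_λ`: the sum of all `w ∈ S_r` stabilizing each row of `t^λ` setwise. -/
noncomputable def xGA (R : Type) [CommRing R] (r a : ℕ) (l1 l2 : List ℕ) :
    MonoidAlgebra R G :=
  ∑ᶠ w ∈ rowStabSet r a l1 l2, MonoidAlgebra.of R G w

end QQS
namespace QQS

/-- The subgroup `W_a ≤ W_r` generated by `s₀, …, s_{a−1}`. -/
def WaGrp (a : ℕ) : Subgroup G := Subgroup.closure {x | ∃ i, i < a ∧ x = s i}

/-- `S_{λ^{(2)}}`: the permutations in `S_r` fixing `1, …, a` and stabilizing each row of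
the second component of `t^λ` setwise. -/
def Slam2 (r a : ℕ) (l2 : List ℕ) : Set G :=
  {w | w ∈ Sgrp r ∧ (∀ i : ℤ, 1 ≤ i → i ≤ (a : ℤ) → w i = i) ∧
    ∀ i : ℤ, (a : ℤ) < i → i ≤ (r : ℤ) → sameRowZ l2 (i - a) (w⁻¹ i - a)}

/-- The product set `W_a × S_{λ^{(2)}}` inside `W_r`. -/
def Pprod (r a : ℕ) (l2 : List ℕ) : Set G :=
  {x | ∃ w1 ∈ WaGrp a, ∃ w2 ∈ Slam2 r a l2, x = w1 * w2}

/-- The set of distinguished (minimal-length) right coset representatives of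
`W_a × S_{λ^{(2)}}` in `W_r`: those `d ∈ W_r` with `ℓ(wd) = ℓ(w) + ℓ(d)` for all
`w ∈ W_a × S_{λ^{(2)}}`. -/
def Ddist (r a : ℕ) (l2 : List ℕ) : Set G :=
  {d | inW r d ∧ ∀ w ∈ Pprod r a l2, len r (w * d) = len r w + len r d}

/-! ### The group of signed permutations -/

lemma inW.zero {r : ℕ} {w : G} (h : inW r w) : w 0 = 0 := by
  have := h.1 0
  simp only [neg_zero] at this
  omega

lemma inW.one (r : ℕ) : inW r 1 := ⟨fun _ => rfl, fun _ _ => rfl⟩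

lemma inW.mul {r : ℕ} {w v : G} (hw : inW r w) (hv : inW r v) : inW r (w * v) := by
  refine ⟨fun i => ?_, fun i hi => ?_⟩
  · simp [hw.1, hv.1]
  · simp [hw.2 i hi, hv.2 i hi]

lemma inW.inv {r : ℕ} {w : G} (hw : inW r w) : inW r w⁻¹ := by
  refine ⟨fun i => ?_, fun i hi => ?_⟩
  · rw [Equiv.Perm.inv_eq_iff_eq, hw.1]; simp
  · rw [Equiv.Perm.inv_eq_iff_eq, hw.2 i hi]

lemma inW.mono {a r : ℕ} (h : a ≤ r) {w : G} (hw : inW a w) : inW r w :=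
  ⟨hw.1, fun i hi => hw.2 i (by omega)⟩

lemma inW.abs_le {r : ℕ} {w : G} (hw : inW r w) {i : ℤ} (hi : |i| ≤ r) : |w i| ≤ r := by
  by_contra! h
  have := w.injective (hw.2 _ h)
  rw [this] at h
  omega

lemma s_apply_s5 (k : ℕ) (x : ℤ) : s k x =
    if k = 0 then (if x = 1 then -1 else if x = -1 then 1 else x)
    else if x = k then k + 1 else if x = k + 1 then k
      else if x = -k then -(k + 1) else if x = -(k + 1) then -k else x := by
  unfold s
  by_cases hk : k = 0
  · rw [if_pos hk, if_pos hk, Equiv.swap_apply_def]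
  · simp only [hk, if_false, Equiv.Perm.mul_apply, Equiv.swap_apply_def]
    split_ifs <;> omega

lemma s_mul_self (k : ℕ) : s k * s k = 1 := by
  ext x
  simp only [Equiv.Perm.mul_apply, s_apply_s5, Equiv.Perm.one_apply]
  split_ifs <;> first | contradiction | omega

lemma s_inv (k : ℕ) : (s k)⁻¹ = s k := inv_eq_of_mul_eq_one_left (s_mul_self k)

lemma s_mul_cancel (k : ℕ) (w : G) : s k * (s k * w) = w := by
  rw [← mul_assoc, s_mul_self, one_mul]

lemma s_inW {r k : ℕ} (h : k < r) : inW r (s k) := by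
  refine ⟨fun i => ?_, fun i hi => ?_⟩
  · simp only [s_apply_s5]
    split_ifs <;> omega
  · rw [lt_abs] at hi
    simp only [s_apply_s5]
    split_ifs <;> omega

lemma WaGrp_inW {a : ℕ} {w : G} (hw : w ∈ WaGrp a) : inW a w := by
  induction hw using Subgroup.closure_induction with
  | mem x hx => obtain ⟨i, hi, rfl⟩ := hx; exact s_inW hi
  | one => exact inW.one a
  | mul x y _ _ hx hy => exact hx.mul hy
  | inv x _ hx => exact hx.inv

lemma Sgrp_inW {a : ℕ} {w : G} (hw : w ∈ Sgrp a) : inW a w := by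
  refine WaGrp_inW ((Subgroup.closure_mono ?_ : Sgrp a ≤ WaGrp a) hw)
  rintro x ⟨i, -, hi, rfl⟩
  exact ⟨i, hi, rfl⟩

/-! ### Inversions -/

/-- The inversions of `f`: pairs `i < j` put in the wrong order by `f`.  The pairs `(-j, j)` are
left out, while pairs involving `0` are kept: for `f ∈ W_r`, negation pairs off the remaining
inversions without fixed points, and each orbit is one negative root made by `f`. -/
def invSet (f : G) : Set (ℤ × ℤ) := {p | p.1 < p.2 ∧ p.1 + p.2 ≠ 0 ∧ f p.2 < f p.1}

/-- The number of inversions, which is twice the length for elements of `W_r`. -/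
noncomputable def invCount (f : G) : ℕ := (invSet f).ncard

lemma invSet_finite {r : ℕ} {f : G} (hf : inW r f) : (invSet f).Finite := by
  refine ((Set.finite_Icc (-(r : ℤ)) r).prod (Set.finite_Icc (-(r : ℤ)) r)).subset ?_
  rintro ⟨i, j⟩ ⟨h1, -, h2⟩
  dsimp only at h1 h2
  have key : ∀ x : ℤ, (|x| ≤ r ∧ |f x| ≤ r) ∨ ((r : ℤ) < |x| ∧ f x = x) := fun x => by
    rcases le_or_gt |x| (r : ℤ) with h | h
    · exact .inl ⟨h, hf.abs_le h⟩
    · exact .inr ⟨h, hf.2 x h⟩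
  have hi := key i
  have hj := key j
  simp only [Set.mem_prod, Set.mem_Icc]
  grind

/-- Additivity of inversions: `u` moves points within the fibres of the monotone map `b` only, and
`e` is increasing on each fibre. -/
lemma invCount_mul {r : ℕ} {e u : G} (b : ℤ → ℤ) (hb : Monotone b) (he : inW r e)
    (hu : inW r u) (hbu : ∀ x, b (u x) = b x)
    (hbe : ∀ i j, b i = b j → i < j → e i < e j) :
    invCount (e * u) = invCount u + invCount e := by
  have hlt : ∀ i j, i < j → b i ≠ b j → u i < u j := fun i j hij hne => by
    refine hb.reflect_lt ?_
    rw [hbu, hbu]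
    exact lt_of_le_of_ne (hb hij.le) hne
  have hsum : ∀ i j, u i + u j = 0 ↔ i + j = 0 := fun i j => by
    rw [← eq_neg_iff_add_eq_zero, ← eq_neg_iff_add_eq_zero, ← hu.1, u.injective.eq_iff]
  -- the inversions of `e * u` between different fibres
  set T : Set (ℤ × ℤ) := {p | p ∈ invSet (e * u) ∧ b p.1 ≠ b p.2} with hT
  have h1 : invSet (e * u) = invSet u ∪ T := by
    ext ⟨i, j⟩
    simp only [hT, invSet, Set.mem_union, Set.mem_ofPred_eq, Equiv.Perm.mul_apply]
    have hl := hlt i j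
    by_cases hB : b i = b j
    · have h3 := hbe (u i) (u j) (by rw [hbu, hbu, hB])
      have h4 := hbe (u j) (u i) (by rw [hbu, hbu, hB])
      have h5 : i < j → u i ≠ u j := fun h h' => h.ne (u.injective h')
      grind
    · grind
  have h2 : Disjoint (invSet u) T := by
    rw [Set.disjoint_left]
    rintro ⟨i, j⟩ ⟨h, -, h'⟩ ⟨-, h3⟩
    exact absurd (hlt i j h h3) (not_lt.2 h'.le)
  have h3 : T.ncard = (invSet e).ncard := by
    refine Set.ncard_congr (fun p _ => (u p.1, u p.2)) ?_ ?_ ?_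
    · rintro ⟨i, j⟩ ⟨⟨h, hs, h'⟩, hne⟩
      exact ⟨hlt i j h hne, fun h0 => hs ((hsum i j).1 h0), h'⟩
    · rintro ⟨i, j⟩ ⟨k, l⟩ - - h
      simpa using h
    · rintro ⟨p, q⟩ ⟨h, hs, h'⟩
      obtain ⟨i, rfl⟩ := u.surjective p
      obtain ⟨j, rfl⟩ := u.surjective q
      dsimp only at h hs h'
      have hne : b i ≠ b j := fun hB =>
        absurd (hbe _ _ (by rw [hbu, hbu, hB]) h) (not_lt.2 h'.le)
      have hij : i < j := by
        rcases lt_trichotomy i j with h0 | h0 | h0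
        · exact h0
        · exact absurd (congrArg b h0) hne
        · exact absurd (hlt j i h0 hne.symm) (not_lt.2 h.le)
      exact ⟨(i, j), ⟨⟨hij, fun h0 => hs ((hsum i j).2 h0), h'⟩, hne⟩, rfl⟩
  have hfin := invSet_finite (he.mul hu)
  rw [h1, Set.finite_union] at hfin
  unfold invCount
  rw [h1, Set.ncard_union_eq h2 hfin.1 hfin.2, h3]

lemma invCount_s (k : ℕ) : invCount (s k) = 2 := by
  have : invSet (s k) = {((k : ℤ), (k : ℤ) + 1), (-((k : ℤ) + 1), -(k : ℤ))} := by
    ext ⟨i, j⟩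
    simp only [invSet, Set.mem_ofPred_eq, s_apply_s5, Set.mem_insert_iff, Set.mem_singleton_iff,
      Prod.mk.injEq]
    constructor
    · rintro ⟨h1, h2, h3⟩
      split_ifs at h3 <;> omega
    · rintro (⟨rfl, rfl⟩ | ⟨rfl, rfl⟩)
      · refine ⟨by omega, by omega, ?_⟩
        split_ifs <;> omega
      · refine ⟨by omega, by omega, ?_⟩
        split_ifs <;> omega
  rw [invCount, this, Set.ncard_pair]
  simp only [ne_eq, Prod.mk.injEq]
  omega

/-- At `k = 0` the ascent condition reads `0 = w⁻¹ 0 < w⁻¹ 1`. -/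
lemma invCount_asc {r k : ℕ} {w : G} (hw : inW r w) (hk : k < r)
    (h : w⁻¹ (k : ℤ) < w⁻¹ ((k : ℤ) + 1)) :
    invCount (s k * w)⁻¹ = invCount w⁻¹ + 2 := by
  have hi := hw.inv
  have hn := hi.1 k
  have hn' := hi.1 ((k : ℤ) + 1)
  rw [mul_inv_rev, s_inv, invCount_mul (r := r)
    (fun x => if x = k + 1 then (k : ℤ) else if x = -(k + 1) then -(k : ℤ) else x)
    ?_ hi (s_inW hk) ?_ ?_, invCount_s, add_comm]
  · intro x y hxy
    dsimp only
    split_ifs <;> omega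
  · intro x
    rw [s_apply_s5]
    split_ifs <;> omega
  · intro i j hb hij
    have h0 := hi.zero
    -- only adjacent points, and the pair `(-1, 1)` when `k = 0`, can share a fibre
    have : (i = k ∧ j = k + 1) ∨ (i = -(k + 1) ∧ j = -k) ∨
        (k = 0 ∧ i = -(k + 1) ∧ j = k + 1) := by
      split_ifs at hb <;> omega
    rcases this with ⟨rfl, rfl⟩ | ⟨rfl, rfl⟩ | ⟨hk0, rfl, rfl⟩
    · exact h
    · omega
    · subst hk0
      simp only [Nat.cast_zero, h0] at h
      simp only [Nat.cast_zero] at hn' ⊢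
      omega

/-- Multiplying by `s k` exchanges the values at `k`, `k + 1`, or changes the sign at `1`. -/
lemma asc_of_desc {r k : ℕ} {w : G} (hw : inW r w)
    (h : ¬ w⁻¹ (k : ℤ) < w⁻¹ ((k : ℤ) + 1)) :
    (s k * w)⁻¹ (k : ℤ) < (s k * w)⁻¹ ((k : ℤ) + 1) := by
  have hne : w⁻¹ (k : ℤ) ≠ w⁻¹ ((k : ℤ) + 1) := fun h' => by
    have := w⁻¹.injective h'
    omega
  rw [mul_inv_rev, s_inv, Equiv.Perm.mul_apply, Equiv.Perm.mul_apply, s_apply_s5, s_apply_s5]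
  rcases Nat.eq_zero_or_pos k with rfl | hk
  · have h0 := hw.inv.zero
    have h1 := hw.inv.1 1
    simp only [Nat.cast_zero, zero_add, h0] at h hne ⊢
    norm_num only [if_true, if_false, h0, h1]
    omega
  · rw [if_neg hk.ne', if_pos rfl, if_neg hk.ne', if_neg (by omega), if_pos rfl]
    omega

lemma invCount_desc {r k : ℕ} {w : G} (hw : inW r w) (hk : k < r)
    (h : ¬ w⁻¹ (k : ℤ) < w⁻¹ ((k : ℤ) + 1)) :
    invCount w⁻¹ = invCount (s k * w)⁻¹ + 2 := by
  have := invCount_asc ((s_inW hk).mul hw) hk (asc_of_desc hw h)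
  rwa [s_mul_cancel] at this

/-! ### The length formula -/

/-- Ascents at nonnegative positions propagate to all integers by oddness. -/
lemma asc_int {r : ℕ} {f : G} (hf : inW r f) {P : ℤ → Prop}
    (hP : ∀ k : ℕ, P k → f k < f ((k : ℤ) + 1)) (hPn : ∀ x, P x → P (-x - 1))
    (x : ℤ) (hx : P x) : f x < f (x + 1) := by
  rcases le_or_gt 0 x with h | h
  · lift x to ℕ using h
    exact hP x hx
  · obtain ⟨m, hm⟩ := Int.eq_ofNat_of_zero_le (show 0 ≤ -x - 1 by omega)
    have h1 := hP m (hm ▸ hPn x hx)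
    have h2 := hf.1 (m : ℤ)
    have h3 := hf.1 ((m : ℤ) + 1)
    rw [show -((m : ℤ)) = x + 1 by omega] at h2
    rw [show -((m : ℤ) + 1) = x by omega] at h3
    omega

lemma fix_asc {r : ℕ} {f : G} (hf : inW r f) {k : ℕ} (hk : r ≤ k) :
    f k < f ((k : ℤ) + 1) := by
  have h1 : f ((k : ℤ) + 1) = k + 1 := hf.2 _ (by rw [abs_of_nonneg] <;> omega)
  have h2 : |f (k : ℤ)| ≤ k := (hf.mono hk).abs_le (by simp)
  have := abs_le.1 h2
  omega

lemma eq_one_of_asc {r : ℕ} {w : G} (hw : inW r w)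
    (h : ∀ k : ℕ, k < r → w⁻¹ (k : ℤ) < w⁻¹ ((k : ℤ) + 1)) : w = 1 := by
  have hi := hw.inv
  have hs : StrictMono ⇑w⁻¹ := strictMono_int_of_lt_succ fun x =>
    asc_int hi (P := fun _ => True) (fun k _ => by
      rcases lt_or_ge k r with hk | hk
      · exact h k hk
      · exact fix_asc hi hk) (fun _ _ => trivial) x trivial
  have hge : ∀ n : ℕ, (n : ℤ) ≤ w⁻¹ n := fun n => by
    induction n with
    | zero => simp [hi.zero]
    | succ n ih =>
      have := hs (show (n : ℤ) < ((n + 1 : ℕ) : ℤ) by omega)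
      push_cast at this ⊢
      omega
  have hle : ∀ m : ℕ, ∀ n : ℕ, r + 1 ≤ n + m → w⁻¹ (n : ℤ) ≤ n := fun m => by
    induction m with
    | zero =>
      intro n hn
      rw [hi.2 n (by simp only [Nat.abs_cast]; omega)]
    | succ m ih =>
      intro n hn
      have h1 := ih (n + 1) (by omega)
      have := hs (show (n : ℤ) < ((n + 1 : ℕ) : ℤ) by omega)
      push_cast at this h1
      omega
  have hnat : ∀ n : ℕ, w⁻¹ (n : ℤ) = n := fun n => le_antisymm (hle (r + 1) n (by omega)) (hge n)
  rw [← inv_eq_one]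
  ext x
  rcases Int.eq_nat_or_neg x with ⟨n, rfl | rfl⟩
  · simpa using hnat n
  · rw [hi.1, hnat]; rfl

lemma invCount_one : invCount 1 = 0 := by
  have : invSet 1 = ∅ := by
    ext ⟨i, j⟩
    simp only [invSet, Set.mem_ofPred_eq, Equiv.Perm.one_apply, Set.mem_empty_iff_false,
      iff_false]
    omega
  rw [invCount, this, Set.ncard_empty]

lemma exists_word {r : ℕ} (n : ℕ) : ∀ w : G, inW r w → invCount w⁻¹ = n →
    ∃ l : List G, (∀ x ∈ l, x ∈ gens r) ∧ l.prod = w ∧ 2 * l.length = n := by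
  induction n using Nat.strong_induction_on with
  | _ n ih =>
    intro w hw hn
    by_cases h : ∀ k : ℕ, k < r → w⁻¹ (k : ℤ) < w⁻¹ ((k : ℤ) + 1)
    · obtain rfl := eq_one_of_asc hw h
      refine ⟨[], by simp, rfl, ?_⟩
      rw [← hn, inv_one, invCount_one]
      rfl
    · push Not at h
      obtain ⟨k, hk, hd⟩ := h
      have h1 := invCount_desc hw hk (not_lt.2 hd)
      obtain ⟨l, hl, hp, hlen⟩ := ih _ (by omega) _ ((s_inW hk).mul hw) rfl
      refine ⟨s k :: l, ?_, ?_, ?_⟩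
      · intro x hx
        rcases List.mem_cons.1 hx with rfl | hx
        · exact ⟨k, hk, rfl⟩
        · exact hl x hx
      · rw [List.prod_cons, hp, s_mul_cancel]
      · rw [List.length_cons]; omega

lemma word_bound {r : ℕ} (l : List G) (hl : ∀ x ∈ l, x ∈ gens r) :
    inW r l.prod ∧ invCount (l.prod)⁻¹ ≤ 2 * l.length := by
  induction l with
  | nil => exact ⟨inW.one r, by simp [invCount_one]⟩
  | cons x l ih =>
    obtain ⟨h1, h2⟩ := ih fun y hy => hl y (List.mem_cons_of_mem _ hy)
    obtain ⟨k, hk, rfl⟩ := hl x List.mem_cons_self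
    rw [List.prod_cons, List.length_cons]
    refine ⟨(s_inW hk).mul h1, ?_⟩
    by_cases h : (l.prod)⁻¹ (k : ℤ) < (l.prod)⁻¹ ((k : ℤ) + 1)
    · rw [invCount_asc h1 hk h]; omega
    · have := invCount_desc h1 hk h
      omega

lemma two_mul_len {r : ℕ} {w : G} (hw : inW r w) : 2 * len r w = invCount w⁻¹ := by
  obtain ⟨l, hl, hp, hlen⟩ := exists_word _ w hw rfl
  have hmem : l.length ∈ {n | ∃ l : List G, l.length = n ∧ (∀ x ∈ l, x ∈ gens r) ∧ l.prod = w} :=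
    ⟨l, rfl, hl, hp⟩
  have h1 : len r w ≤ l.length := Nat.sInf_le hmem
  obtain ⟨l', h2, h3, h4⟩ := Nat.sInf_mem ⟨_, hmem⟩
  have h5 := (word_bound l' h3).2
  rw [h4, h2] at h5
  change _ ≤ 2 * len r w at h5
  omega

/-! ### Rows of a composition -/

lemma psum_succ (l : List ℕ) (k : ℕ) : psum l (k + 1) = psum l k + l.getD k 0 := by
  induction l generalizing k with
  | nil => simp [psum]
  | cons x l ih =>
    cases k with
    | zero => simp [psum]
    | succ k =>
      have := ih k
      simp only [psum, List.take_succ_cons, List.sum_cons, List.getD_cons_succ] at this ⊢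
      omega

lemma psum_mono (l : List ℕ) : Monotone (psum l) :=
  monotone_nat_of_le_succ fun k => by rw [psum_succ]; omega

lemma psum_le (l : List ℕ) (k : ℕ) : psum l k ≤ l.sum := by
  have h := List.sum_take_add_sum_drop l k
  unfold psum
  omega

lemma psum_length (l : List ℕ) : psum l l.length = l.sum := by
  simp [psum]

lemma row_bound {l : List ℕ} {i j : ℕ} (h : j < l.getD i 0) : psum l i + j + 1 ≤ l.sum := by
  have := psum_le l (i + 1)
  rw [psum_succ] at this
  omega

lemma exists_row {l : List ℕ} {m : ℕ} (h0 : 0 < m) (h : m ≤ l.sum) :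
    ∃ i j, i < l.length ∧ j < l.getD i 0 ∧ m = psum l i + j + 1 := by
  have hex : ∃ k, m ≤ psum l k := ⟨l.length, by rwa [psum_length]⟩
  classical
  have h1 := Nat.find_spec hex
  have hle : Nat.find hex ≤ l.length := Nat.find_le (by rwa [psum_length])
  obtain ⟨i, hi⟩ : ∃ i, Nat.find hex = i + 1 := by
    refine Nat.exists_eq_succ_of_ne_zero fun h2 => ?_
    rw [h2] at h1
    simp [psum] at h1
    omega
  have h2 := Nat.find_min hex (show i < Nat.find hex by omega)
  rw [hi, psum_succ] at h1
  exact ⟨i, m - psum l i - 1, by omega, by omega, by omega⟩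

/-- The number of row boundaries `a + psum l k` of the second component lying strictly below `x`;
the boundary `a` itself, at `k = 0`, is included. -/
def rowCount (a : ℕ) (l : List ℕ) (x : ℤ) : ℕ :=
  ((Finset.range (l.length + 1)).filter fun k => (a : ℤ) + psum l k < x).card

/-- A monotone odd labelling of the integers, with label `0` on `{-a, …, a}`, label `i + 1` on row
`i` of the second component of `t^λ` and `-(i + 1)` on its negative. -/
def blockIdx (a : ℕ) (l : List ℕ) (x : ℤ) : ℤ := rowCount a l x - rowCount a l (-x)

lemma rowCount_mono (a : ℕ) (l : List ℕ) : Monotone (rowCount a l) := fun _ _ hxy =>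
  Finset.card_le_card (Finset.monotone_filter_right _ fun _ _ h => lt_of_lt_of_le h hxy)

lemma blockIdx_mono (a : ℕ) (l : List ℕ) : Monotone (blockIdx a l) := fun x y hxy => by
  have h1 := rowCount_mono a l hxy
  have h2 := rowCount_mono a l (neg_le_neg hxy)
  unfold blockIdx
  omega

lemma blockIdx_neg (a : ℕ) (l : List ℕ) (x : ℤ) : blockIdx a l (-x) = -blockIdx a l x := by
  unfold blockIdx
  rw [neg_neg]
  omega

lemma rowCount_eq_zero {a : ℕ} {l : List ℕ} {x : ℤ} (h : x ≤ a) : rowCount a l x = 0 := by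
  rw [rowCount, Finset.card_eq_zero, Finset.filter_eq_empty_iff]
  intro k _
  omega

lemma rowCount_lt {a : ℕ} {l : List ℕ} {k : ℕ} {x y : ℤ} (hk : k ≤ l.length)
    (hx : x ≤ a + psum l k) (hy : (a : ℤ) + psum l k < y) : rowCount a l x < rowCount a l y := by
  refine Finset.card_lt_card ⟨Finset.monotone_filter_right _ fun _ _ h => by omega, fun h => ?_⟩
  have := h (Finset.mem_filter.2 ⟨Finset.mem_range.2 (by omega), hy⟩)
  have := (Finset.mem_filter.1 this).2
  omega

lemma rowCount_eq_of_sameRow {a : ℕ} {l : List ℕ} {x y : ℤ} (h : sameRowZ l (x - a) (y - a)) :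
    rowCount a l x = rowCount a l y := by
  obtain ⟨k, h1, h2, h3, h4⟩ := h
  unfold rowCount
  congr 1
  refine Finset.filter_congr fun k' _ => ?_
  rcases le_or_gt k' k with h | h
  · have := psum_mono l h
    constructor <;> intro <;> omega
  · have := psum_mono l (show k + 1 ≤ k' from h)
    constructor <;> intro <;> omega

/-! ### Distinguished coset representatives -/

lemma Slam2_inW {r a : ℕ} {l2 : List ℕ} {w : G} (h : w ∈ Slam2 r a l2) : inW r w :=
  Sgrp_inW h.1

lemma blockIdx_Wa {a : ℕ} {l2 : List ℕ} {w : G} (h : inW a w) (x : ℤ) :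
    blockIdx a l2 (w x) = blockIdx a l2 x := by
  rcases le_or_gt |x| (a : ℤ) with hx | hx
  · have h1 := abs_le.1 hx
    have h2 := abs_le.1 (h.abs_le hx)
    unfold blockIdx
    rw [rowCount_eq_zero (by omega), rowCount_eq_zero (by omega), rowCount_eq_zero (by omega),
      rowCount_eq_zero (by omega)]
  · rw [h.2 x hx]

lemma blockIdx_Slam2 {r a : ℕ} {l2 : List ℕ} {w : G} (h : w ∈ Slam2 r a l2) (x : ℤ) :
    blockIdx a l2 (w⁻¹ x) = blockIdx a l2 x := by
  have hi := (Slam2_inW h).inv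
  have key : ∀ n : ℕ, blockIdx a l2 (w⁻¹ n) = blockIdx a l2 n := fun n => by
    rcases Nat.eq_zero_or_pos n with rfl | h0
    · rw [Nat.cast_zero, hi.zero]
    rcases le_or_gt n a with h1 | h1
    · rw [Equiv.Perm.inv_eq_iff_eq.2 (h.2.1 n (by omega) (by omega)).symm]
    rcases le_or_gt n r with h2 | h2
    · have h3 := h.2.2 n (by omega) (by omega)
      have h4 : (a : ℤ) < w⁻¹ n := by
        obtain ⟨k, -, -, h4, -⟩ := h3
        omega
      unfold blockIdx
      rw [rowCount_eq_of_sameRow h3, rowCount_eq_zero (x := -(w⁻¹ (n : ℤ))) (by omega),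
        rowCount_eq_zero (x := -(n : ℤ)) (by omega)]
    · rw [hi.2 n (by simp only [Nat.abs_cast]; omega)]
  rcases Int.eq_nat_or_neg x with ⟨n, rfl | rfl⟩
  · exact key n
  · rw [hi.1, blockIdx_neg, blockIdx_neg, key]

/-- `d⁻¹` increases on `0, 1, …, a` and along each row of the second component of `t^λ`. -/
def IsAsc (a : ℕ) (l2 : List ℕ) (d : G) : Prop :=
  (∀ k : ℕ, k < a → d⁻¹ (k : ℤ) < d⁻¹ ((k : ℤ) + 1)) ∧
  (∀ i j : ℕ, j + 1 < l2.getD i 0 →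
    d⁻¹ ((a + psum l2 i + j + 1 : ℕ) : ℤ) < d⁻¹ ((a + psum l2 i + j + 2 : ℕ) : ℤ))

lemma IsAsc.asc_of_blockIdx {r a : ℕ} {l2 : List ℕ} {d : G} (hr : a + l2.sum = r)
    (hd : inW r d) (h : IsAsc a l2 d) (k : ℕ)
    (hk : blockIdx a l2 k = blockIdx a l2 ((k : ℤ) + 1)) :
    d⁻¹ (k : ℤ) < d⁻¹ ((k : ℤ) + 1) := by
  rcases lt_or_ge k a with h1 | h1
  · exact h.1 k h1
  rcases le_or_gt r k with h2 | h2
  · exact fix_asc hd.inv h2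
  have hk' : ∀ i, i ≤ l2.length → k ≠ a + psum l2 i := fun i hi hki => by
    have h3 := rowCount_lt (a := a) (l := l2) (x := k) (y := (k : ℤ) + 1) hi (by omega) (by omega)
    unfold blockIdx at hk
    rw [rowCount_eq_zero (x := -(k : ℤ)) (by omega),
      rowCount_eq_zero (x := -((k : ℤ) + 1)) (by omega)] at hk
    omega
  have h3 : k ≠ a := by simpa [psum] using hk' 0 (by omega)
  obtain ⟨i, j, hi, hj, hm⟩ := exists_row (l := l2) (m := k - a) (by omega) (by omega)
  have h4 := hk' (i + 1) hi
  rw [psum_succ] at h4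
  have h5 := h.2 i j (by omega)
  rw [show a + psum l2 i + j + 1 = k by omega, show a + psum l2 i + j + 2 = k + 1 by omega] at h5
  exact_mod_cast h5

lemma IsAsc.strict {r a : ℕ} {l2 : List ℕ} {d : G} (hr : a + l2.sum = r)
    (hd : inW r d) (h : IsAsc a l2 d) (i j : ℤ) (hb : blockIdx a l2 i = blockIdx a l2 j)
    (hij : i < j) : d⁻¹ i < d⁻¹ j := by
  have step : ∀ x, blockIdx a l2 x = blockIdx a l2 (x + 1) → d⁻¹ x < d⁻¹ (x + 1) :=
    asc_int hd.inv (h.asc_of_blockIdx hr hd) fun x hx => by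
      rw [show -x - 1 = -(x + 1) by ring, show -(x + 1) + 1 = -x by ring, blockIdx_neg,
        blockIdx_neg, hx]
  obtain ⟨n, rfl⟩ : ∃ n : ℕ, j = i + 1 + n := ⟨(j - i - 1).toNat, by omega⟩
  clear hij
  induction n with
  | zero => simpa using step i (by simpa using hb)
  | succ n ih =>
    have h1 := blockIdx_mono a l2 (show i ≤ i + 1 + n by omega)
    have h2 := blockIdx_mono a l2 (show i + 1 + n ≤ i + 1 + (n + 1 : ℕ) by omega)
    have h3 := ih (by omega)
    have h4 := step (i + 1 + n) (by
      rw [show i + 1 + (n : ℤ) + 1 = i + 1 + (n + 1 : ℕ) by push_cast; ring]; omega)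
    rw [show i + 1 + (n : ℤ) + 1 = i + 1 + (n + 1 : ℕ) by push_cast; ring] at h4
    omega

lemma IsAsc.strict_Icc {r a : ℕ} {l2 : List ℕ} {d : G} (hr : a + l2.sum = r)
    (hd : inW r d) (h : IsAsc a l2 d) : StrictMonoOn ⇑d⁻¹ (Set.Icc (-(a : ℤ)) a) := by
  rintro x ⟨hx1, hx2⟩ y ⟨hy1, hy2⟩ hxy
  refine h.strict hr hd x y ?_ hxy
  unfold blockIdx
  rw [rowCount_eq_zero (by omega), rowCount_eq_zero (by omega), rowCount_eq_zero (by omega),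
    rowCount_eq_zero (by omega)]

lemma sameRowZ_self {r a : ℕ} {l2 : List ℕ} (hr : a + l2.sum = r) {i : ℤ} (h1 : (a : ℤ) < i)
    (h2 : i ≤ r) : sameRowZ l2 (i - a) (i - a) := by
  obtain ⟨m, hm⟩ := Int.eq_ofNat_of_zero_le (show 0 ≤ i - a by omega)
  obtain ⟨k, j, -, hj, hk⟩ := exists_row (l := l2) (m := m) (by omega) (by omega)
  refine ⟨k, ?_⟩
  rw [psum_succ]
  push_cast
  omega

lemma one_mem_Slam2 {r a : ℕ} {l2 : List ℕ} (hr : a + l2.sum = r) : (1 : G) ∈ Slam2 r a l2 :=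
  ⟨one_mem _, fun _ _ _ => rfl, fun _ h1 h2 => sameRowZ_self hr h1 h2⟩

lemma s_mem_Slam2 {r a : ℕ} {l2 : List ℕ} (hr : a + l2.sum = r) {i j : ℕ}
    (h : j + 1 < l2.getD i 0) : s (a + psum l2 i + j + 1) ∈ Slam2 r a l2 := by
  have hb := row_bound h
  refine ⟨Subgroup.subset_closure ⟨_, by omega, by omega, rfl⟩, fun x h1 h2 => ?_,
    fun x h1 h2 => ?_⟩
  · rw [s_apply_s5]
    push_cast
    split_ifs <;> omega
  · have hself := sameRowZ_self hr h1 h2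
    have hp := psum_succ l2 i
    rw [s_inv, s_apply_s5]
    push_cast
    split_ifs
    any_goals first | omega | exact hself
    · exact ⟨i, by omega, by omega, by omega, by omega⟩
    · exact ⟨i, by omega, by omega, by omega, by omega⟩

lemma asc_of_mem_Ddist {r a k : ℕ} {l2 : List ℕ} {d : G} (hd : d ∈ Ddist r a l2) (hk : k < r)
    (hs : s k ∈ Pprod r a l2) : d⁻¹ (k : ℤ) < d⁻¹ ((k : ℤ) + 1) := by
  by_contra h
  have h1 := hd.2 _ hs
  have h2 := invCount_desc hd.1 hk h
  rw [← two_mul_len hd.1, ← two_mul_len ((s_inW hk).mul hd.1)] at h2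
  omega

lemma mem_Ddist_iff {r a : ℕ} {l2 : List ℕ} {d : G} (hr : a + l2.sum = r) :
    d ∈ Ddist r a l2 ↔ inW r d ∧ IsAsc a l2 d := by
  constructor
  · intro hd
    refine ⟨hd.1, fun k hk => ?_, fun i j hj => ?_⟩
    · exact asc_of_mem_Ddist hd (by omega)
        ⟨s k, Subgroup.subset_closure ⟨k, hk, rfl⟩, 1, one_mem_Slam2 hr, (mul_one _).symm⟩
    · have hb := row_bound hj
      have := asc_of_mem_Ddist hd (k := a + psum l2 i + j + 1) (by omega)
        ⟨1, one_mem _, _, s_mem_Slam2 hr hj, (one_mul _).symm⟩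
      exact_mod_cast this
  · rintro ⟨hd, h⟩
    refine ⟨hd, ?_⟩
    rintro _ ⟨w1, hw1, w2, hw2, rfl⟩
    have i1 := WaGrp_inW hw1
    have hw := (i1.mono (show a ≤ r by omega)).mul (Slam2_inW hw2)
    have key := invCount_mul (blockIdx a l2) (blockIdx_mono a l2) hd.inv hw.inv
      (fun x => by
        rw [mul_inv_rev, Equiv.Perm.mul_apply, blockIdx_Slam2 hw2, blockIdx_Wa i1.inv])
      (h.strict hr hd)
    rw [← mul_inv_rev, ← two_mul_len (hw.mul hd), ← two_mul_len hw, ← two_mul_len hd] at key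
    omega

/-! ### Sorting by an element of the symmetric group -/

/-- Bubble sort: each step swaps two adjacent values in the wrong order, removing inversions. -/
lemma exists_sorting {r a : ℕ} (har : a ≤ r) (n : ℕ) : ∀ v : G, inW r v → invCount v⁻¹ = n →
    (∀ x : ℤ, 1 ≤ x → x ≤ a → 0 < v⁻¹ x) →
    ∃ w ∈ Sgrp a, ∀ k : ℕ, k < a → (w⁻¹ * v)⁻¹ (k : ℤ) < (w⁻¹ * v)⁻¹ ((k : ℤ) + 1) := by
  induction n using Nat.strong_induction_on with
  | _ n ih =>
    intro v hv hn hpos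
    by_cases h : ∀ k : ℕ, k < a → v⁻¹ (k : ℤ) < v⁻¹ ((k : ℤ) + 1)
    · exact ⟨1, one_mem _, by simpa using h⟩
    · push Not at h
      obtain ⟨k, hk, hd⟩ := h
      have hk0 : 1 ≤ k := by
        by_contra h0
        obtain rfl : k = 0 := by omega
        have := hpos 1 (by omega) (by omega)
        have h0 := hv.inv.zero
        simp only [Nat.cast_zero, zero_add] at hd
        omega
      have h1 := invCount_desc hv (by omega : k < r) (not_lt.2 hd)
      obtain ⟨w, hw, hasc⟩ := ih _ (by omega) (s k * v) ((s_inW (by omega)).mul hv) rfl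
        (fun x hx1 hx2 => by
          rw [mul_inv_rev, s_inv, Equiv.Perm.mul_apply]
          refine hpos _ ?_ ?_ <;> rw [s_apply_s5] <;> split_ifs <;> omega)
      refine ⟨s k * w, mul_mem (Subgroup.subset_closure ⟨k, hk0, hk, rfl⟩) hw, ?_⟩
      rwa [mul_inv_rev (s k) w, s_inv, mul_assoc]

/-- Let `λ = (l1, l2)` be an `a`-bicomposition of `r`.  Then
`{wd : w ∈ S_a, d ∈ D, t^λ·w row standard} = {v ∈ W_r : t^λ·v row standard}`. -/
theorem row_standard_coset_decomposition (r a : ℕ) (l1 l2 : List ℕ)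
    (ha : l1.sum = a) (hr : l1.sum + l2.sum = r) :
    {x : G | ∃ w ∈ Sgrp a, ∃ d ∈ Ddist r a l2, rowStd a l1 l2 w ∧ x = w * d} =
      {v : G | inW r v ∧ rowStd a l1 l2 v} := by
  subst ha
  have hal : l1.sum ≤ r := by omega
  ext x
  constructor
  · rintro ⟨w, hw, d, hd, hstd, rfl⟩
    obtain ⟨hdW, hasc⟩ := (mem_Ddist_iff hr).1 hd
    have hwW := Sgrp_inW hw
    have hmono := hasc.strict_Icc hr hdW
    -- entries of the first component of `t^λ·w`
    have hmem : ∀ i j, j < l1.getD i 0 →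
        w⁻¹ ((psum l1 i + j + 1 : ℕ) : ℤ) ∈ Set.Icc (-(l1.sum : ℤ)) l1.sum := fun i j hj => by
      have := row_bound hj
      exact abs_le.1 (hwW.inv.abs_le (by rw [Nat.abs_cast]; omega))
    refine ⟨(hwW.mono hal).mul hdW, fun i j hj => ?_, fun i j hj => ?_, fun i j hj => ?_⟩
    · have := hmono (show (0 : ℤ) ∈ _ from ⟨by omega, by omega⟩) (hmem i j hj) (hstd.1 i j hj)
      rwa [hdW.inv.zero] at this
    · exact hmono (hmem i j (by omega)) (hmem i (j + 1) hj) (hstd.2.1 i j hj)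
    · rw [mul_inv_rev, Equiv.Perm.mul_apply, Equiv.Perm.mul_apply,
        hwW.inv.2 _ (by rw [Nat.abs_cast]; omega), hwW.inv.2 _ (by rw [Nat.abs_cast]; omega)]
      exact hasc.2 i j hj
  · rintro ⟨hv, hstd⟩
    obtain ⟨w, hw, hsort⟩ := exists_sorting hal _ x hv rfl (fun y hy1 hy2 => by
      lift y to ℕ using by omega
      obtain ⟨i, j, -, hj, rfl⟩ := exists_row (l := l1) (m := y) (by omega) (by omega)
      exact hstd.1 i j hj)
    have hwW := Sgrp_inW hw
    have hdW : inW r (w⁻¹ * x) := (hwW.inv.mono hal).mul hv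
    have hfix : ∀ y : ℕ, l1.sum < y → w y = y := fun y hy =>
      hwW.2 y (by rw [Nat.abs_cast]; omega)
    have hasc : IsAsc l1.sum l2 (w⁻¹ * x) := by
      refine ⟨hsort, fun i j hj => ?_⟩
      rw [mul_inv_rev, inv_inv, Equiv.Perm.mul_apply, Equiv.Perm.mul_apply,
        hfix _ (by omega), hfix _ (by omega)]
      exact hstd.2.2 i j hj
    have hmono := hasc.strict_Icc hr hdW
    have hval : ∀ y, (w⁻¹ * x)⁻¹ (w⁻¹ y) = x⁻¹ y := fun y => by simp
    have hmem : ∀ i j, j < l1.getD i 0 →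
        w⁻¹ ((psum l1 i + j + 1 : ℕ) : ℤ) ∈ Set.Icc (-(l1.sum : ℤ)) l1.sum := fun i j hj => by
      have := row_bound hj
      exact abs_le.1 (hwW.inv.abs_le (by rw [Nat.abs_cast]; omega))
    refine ⟨w, hw, w⁻¹ * x, (mem_Ddist_iff hr).2 ⟨hdW, hasc⟩,
      ⟨fun i j hj => ?_, fun i j hj => ?_, fun i j hj => ?_⟩, by simp⟩
    -- `w⁻¹ = (w⁻¹ * x) ∘ x⁻¹` inherits the order of `x⁻¹`, since `(w⁻¹ * x)⁻¹` increases
    -- on `{-a, …, a}`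
    · refine (hmono.lt_iff_lt (show (0 : ℤ) ∈ _ from ⟨by omega, by omega⟩) (hmem i j hj)).1 ?_
      rw [hdW.inv.zero, hval]
      exact hstd.1 i j hj
    · refine (hmono.lt_iff_lt (hmem i j (by omega)) (hmem i (j + 1) hj)).1 ?_
      rw [hval, hval]
      exact hstd.2.1 i j hj
    · rw [hwW.inv.2 _ (by rw [Nat.abs_cast]; omega), hwW.inv.2 _ (by rw [Nat.abs_cast]; omega)]
      omega

end QQS
end
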